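/- ℝⁿ and ℝᵐ are not homeomorphic unless n = m. -/

import Mathlib

open MeasureTheory Metric Set Filter Topology

/-- The determinant of an endomorphism factoring through a smaller space vanishes. -/
lemma det_comp_eq_zero_of_finrank_lt {E F : Type*} [NormedAddCommGroup E] [NormedSpace ℝ E]
    [FiniteDimensional ℝ E] [NormedAddCommGroup F] [NormedSpace ℝ F] [FiniteDimensional ℝ F]
    (hd : Module.finrank ℝ F < Module.finrank ℝ E) (A : F →L[ℝ] E) (B : E →L[ℝ] F) :
    (A.comp B).det = 0 := by
  by_contra h
  have hinj : Function.Injective (A.comp B) :=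
    (LinearMap.equivOfDetNeZero (A.comp B : E →ₗ[ℝ] E) h).injective
  have hB : Function.Injective (B : E →ₗ[ℝ] F) := by
    intro x y hxy
    apply hinj
    have : B x = B y := hxy
    simp [this]
  exact absurd (LinearMap.finrank_le_finrank_of_injective hB) (not_le.2 hd)

/-- Evaluation at a point as a ring homomorphism. -/
def evalHomAt {X : Type*} [TopologicalSpace X] (x : X) : C(X, ℝ) →+* ℝ where
  toFun f := f x
  map_one' := rfl
  map_mul' _ _ := rfl
  map_zero' := rfl
  map_add' _ _ := rfl

/-- Integrals of functions polynomial in a parameter are polynomial in the parameter. -/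
lemma integral_poly {X : Type*} [TopologicalSpace X] [MeasurableSpace X] [OpensMeasurableSpace X]
    [T2Space X]
    (μ : Measure X) [IsFiniteMeasureOnCompacts μ] (s : Set X) (hs : IsCompact s)
    (P : Polynomial C(X, ℝ)) :
    ∃ Q : Polynomial ℝ, ∀ t : ℝ,
      ∫ x in s, P.eval₂ (evalHomAt x) t ∂μ = Q.eval t := by
  refine ⟨∑ i ∈ P.support, Polynomial.monomial i (∫ x in s, P.coeff i x ∂μ), fun t => ?_⟩
  simp only [Polynomial.eval₂_eq_sum, Polynomial.sum, Polynomial.eval_finsetSum,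
    Polynomial.eval_monomial]
  rw [integral_finsetSum]
  · refine Finset.sum_congr rfl fun i _ => ?_
    rw [← integral_mul_const]
    rfl
  · intro i _
    exact ContinuousOn.integrableOn_compact hs
      (((P.coeff i).continuous.mul continuous_const).continuousOn)

/-- For a compactly supported `C¹` perturbation of the identity, the integral is polynomial. -/
lemma exists_poly {n : ℕ} (u : EuclideanSpace ℝ (Fin n) → EuclideanSpace ℝ (Fin n))
    (hu : ContDiff ℝ 1 u) (k : ℕ) :
    ∃ Q : Polynomial ℝ, ∀ t : ℝ,
      ∫ x in closedBall (0 : EuclideanSpace ℝ (Fin n)) 2,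
        (ContinuousLinearMap.id ℝ _ + t • fderiv ℝ u x).det *
          (1 - ‖x + t • u x‖ ^ 2 / 8) ^ k = Q.eval t := by
  classical
  have hc : Continuous (fderiv ℝ u) := hu.continuous_fderiv (by simp)
  let b := (EuclideanSpace.basisFun (Fin n) ℝ).toBasis
  let D : Fin n → Fin n → C((EuclideanSpace ℝ (Fin n)), ℝ) := fun i j =>
    ⟨fun x => fderiv ℝ u x (EuclideanSpace.single j 1) i, by fun_prop⟩
  let U : Fin n → C((EuclideanSpace ℝ (Fin n)), ℝ) := fun i => ⟨fun x => u x i, by have := hu.continuous; fun_prop⟩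
  let I : Fin n → C((EuclideanSpace ℝ (Fin n)), ℝ) := fun i => ⟨fun x => x i, by fun_prop⟩
  let M : Matrix (Fin n) (Fin n) (Polynomial C((EuclideanSpace ℝ (Fin n)), ℝ)) :=
    Matrix.of fun i j => (if i = j then 1 else 0) + Polynomial.X * Polynomial.C (D i j)
  let S : Polynomial C((EuclideanSpace ℝ (Fin n)), ℝ) :=
    ∑ i, (Polynomial.C (I i) + Polynomial.X * Polynomial.C (U i)) ^ 2
  let P : Polynomial C((EuclideanSpace ℝ (Fin n)), ℝ) :=
    M.det * (1 - S * Polynomial.C (ContinuousMap.const (EuclideanSpace ℝ (Fin n)) (1 / 8))) ^ k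
  obtain ⟨Q, hQ⟩ := integral_poly (volume : Measure (EuclideanSpace ℝ (Fin n))) (closedBall 0 2)
    (isCompact_closedBall 0 2) P
  refine ⟨Q, fun t => ?_⟩
  rw [← hQ]
  congr 1
  ext x
  let φ : Polynomial C((EuclideanSpace ℝ (Fin n)), ℝ) →+* ℝ := Polynomial.eval₂RingHom (evalHomAt x) t
  change _ = φ P
  have hφC : ∀ a : C((EuclideanSpace ℝ (Fin n)), ℝ), φ (Polynomial.C a) = a x := fun a => by
    simp only [φ, Polynomial.coe_eval₂RingHom, Polynomial.eval₂_C]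
    rfl
  have hφX : φ Polynomial.X = t := by simp [φ]
  have h1 : φ M.det = (ContinuousLinearMap.id ℝ (EuclideanSpace ℝ (Fin n)) + t • fderiv ℝ u x).det := by
    rw [RingHom.map_det, ContinuousLinearMap.det, ← LinearMap.det_toMatrix b]
    congr 1
    ext i j
    rw [LinearMap.toMatrix_apply]
    simp only [RingHom.mapMatrix_apply, Matrix.map_apply, M, Matrix.of_apply, map_add, map_mul,
      hφC, hφX, D, b]
    by_cases hij : i = j <;> simp [hij]
  have h2 : φ S = ‖x + t • u x‖ ^ 2 := by
    rw [EuclideanSpace.norm_sq_eq]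
    simp only [S, map_sum, map_pow, map_add, map_mul, hφC, hφX]
    refine Finset.sum_congr rfl fun i _ => ?_
    simp [I, U]
  simp only [P, map_mul, map_pow, map_sub, map_one, h1, h2, hφC]
  simp [div_eq_mul_inv]

/-- Small perturbations: change of variables. -/
lemma small_perturb {n : ℕ} (u : EuclideanSpace ℝ (Fin n) → EuclideanSpace ℝ (Fin n))
    (hu : ContDiff ℝ 1 u) (hcs : HasCompactSupport u) (h0 : ∀ x, 2 < ‖x‖ → u x = 0)
    (g : EuclideanSpace ℝ (Fin n) → ℝ) :
    ∀ᶠ t : ℝ in 𝓝 0,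
      ∫ x in closedBall (0 : EuclideanSpace ℝ (Fin n)) 2,
        (ContinuousLinearMap.id ℝ _ + t • fderiv ℝ u x).det * g (x + t • u x) =
      ∫ x in closedBall (0 : EuclideanSpace ℝ (Fin n)) 2, g x := by
  obtain ⟨C, hC⟩ := hu.lipschitzWith_of_hasCompactSupport hcs (by simp)
  have hCd : ∀ x, ‖fderiv ℝ u x‖ ≤ C := fun x => norm_fderiv_le_of_lipschitz ℝ hC
  have hdet : ∀ᶠ A : EuclideanSpace ℝ (Fin n) →L[ℝ] EuclideanSpace ℝ (Fin n) in 𝓝 0,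
      0 < (ContinuousLinearMap.id ℝ _ + A).det := by
    have hcont : Continuous fun A : EuclideanSpace ℝ (Fin n) →L[ℝ] EuclideanSpace ℝ (Fin n) =>
        (ContinuousLinearMap.id ℝ _ + A).det :=
      ContinuousLinearMap.continuous_det.comp (by fun_prop)
    refine hcont.continuousAt.eventually (lt_mem_nhds ?_)
    simp [ContinuousLinearMap.det]
  obtain ⟨δ, hδ, hδ'⟩ := Metric.eventually_nhds_iff.1 hdet
  have e1 : ∀ᶠ t : ℝ in 𝓝 0, |t| * C < δ := by
    have : Continuous fun t : ℝ => |t| * (C : ℝ) := by fun_prop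
    exact this.continuousAt.eventually (gt_mem_nhds (by simpa using hδ))
  have e2 : ∀ᶠ t : ℝ in 𝓝 0, |t| * C < 1 := by
    have : Continuous fun t : ℝ => |t| * (C : ℝ) := by fun_prop
    exact this.continuousAt.eventually (gt_mem_nhds (by simp))
  filter_upwards [e1, e2] with t ht1 ht2
  set f : EuclideanSpace ℝ (Fin n) → EuclideanSpace ℝ (Fin n) := fun x => x + t • u x with hf
  have happ : ApproximatesLinearOn f
      ((ContinuousLinearEquiv.refl ℝ (EuclideanSpace ℝ (Fin n)) :
        EuclideanSpace ℝ (Fin n) ≃L[ℝ] EuclideanSpace ℝ (Fin n)) :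
        EuclideanSpace ℝ (Fin n) →L[ℝ] EuclideanSpace ℝ (Fin n)) univ (‖t‖₊ * C) := by
    intro x _ y _
    have : f x - f y - (x - y) = t • (u x - u y) := by simp only [hf, smul_sub]; abel
    simp only [ContinuousLinearEquiv.coe_refl, ContinuousLinearMap.coe_id', id]
    rw [this, norm_smul]
    have h2 := hC.dist_le_mul x y
    rw [dist_eq_norm, dist_eq_norm] at h2
    push_cast
    rw [mul_assoc]
    gcongr
  have hsub : Subsingleton (EuclideanSpace ℝ (Fin n)) ∨ ‖t‖₊ * C <
      ‖((ContinuousLinearEquiv.refl ℝ (EuclideanSpace ℝ (Fin n))).symm :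
        EuclideanSpace ℝ (Fin n) →L[ℝ] EuclideanSpace ℝ (Fin n))‖₊⁻¹ := by
    rcases subsingleton_or_nontrivial (EuclideanSpace ℝ (Fin n)) with h | h
    · exact Or.inl h
    · right
      have h1 : ‖((ContinuousLinearEquiv.refl ℝ (EuclideanSpace ℝ (Fin n))).symm :
        EuclideanSpace ℝ (Fin n) →L[ℝ] EuclideanSpace ℝ (Fin n))‖₊ = 1 := by
        ext
        simp
      rw [h1, inv_one]
      exact_mod_cast ht2
  have hinj : Function.Injective f := by
    have := happ.injOn hsub
    rwa [injOn_univ] at this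
  have hsurj : Function.Surjective f := happ.surjective hsub
  have hfix : ∀ x, 2 < ‖x‖ → f x = x := fun x hx => by simp [hf, h0 x hx]
  have himg : f '' closedBall 0 2 = closedBall 0 2 := by
    ext y
    simp only [mem_image, mem_closedBall_zero_iff]
    constructor
    · rintro ⟨x, hx, rfl⟩
      by_contra hy
      have := hinj (hfix _ (not_le.1 hy))
      rw [this] at hy
      exact hy hx
    · intro hy
      obtain ⟨x, rfl⟩ := hsurj y
      refine ⟨x, ?_, rfl⟩
      by_contra hx
      rw [hfix x (not_le.1 hx)] at hy
      exact hx hy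
  have hder : ∀ x ∈ closedBall (0 : EuclideanSpace ℝ (Fin n)) 2, HasFDerivWithinAt f
      (ContinuousLinearMap.id ℝ _ + t • fderiv ℝ u x) (closedBall 0 2) x := by
    intro x _
    have h1 : HasFDerivAt u (fderiv ℝ u x) x :=
      (hu.differentiable (by simp) x).hasFDerivAt
    exact ((hasFDerivAt_id x).add (h1.const_smul t)).hasFDerivWithinAt
  have key := integral_image_eq_integral_abs_det_fderiv_smul (volume)
    measurableSet_closedBall hder hinj.injOn g
  rw [himg] at key
  rw [key]
  congr 1
  ext x
  have hpos : 0 < (ContinuousLinearMap.id ℝ _ + t • fderiv ℝ u x).det := by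
    apply hδ'
    rw [dist_zero_right, norm_smul]
    refine lt_of_le_of_lt ?_ ht1
    exact mul_le_mul_of_nonneg_left (hCd x) (abs_nonneg t)
  rw [abs_of_pos hpos, smul_eq_mul]

lemma degree_identity {n : ℕ} (u : EuclideanSpace ℝ (Fin n) → EuclideanSpace ℝ (Fin n))
    (hu : ContDiff ℝ 1 u) (hcs : HasCompactSupport u) (h0 : ∀ x, 2 < ‖x‖ → u x = 0) (k : ℕ) :
      ∫ x in closedBall (0 : EuclideanSpace ℝ (Fin n)) 2,
        (ContinuousLinearMap.id ℝ _ + fderiv ℝ u x).det * (1 - ‖x + u x‖ ^ 2 / 8) ^ k =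
      ∫ x in closedBall (0 : EuclideanSpace ℝ (Fin n)) 2, (1 - ‖x‖ ^ 2 / 8) ^ k := by
  obtain ⟨Q, hQ⟩ := exists_poly u hu k
  have hev := small_perturb u hu hcs h0 (fun y => (1 - ‖y‖ ^ 2 / 8) ^ k)
  have hQc : Q = Polynomial.C
      (∫ x in closedBall (0 : EuclideanSpace ℝ (Fin n)) 2, (1 - ‖x‖ ^ 2 / 8) ^ k) := by
    apply Polynomial.eq_of_infinite_eval_eq
    refine (infinite_of_mem_nhds (0 : ℝ) hev).mono ?_
    intro t ht
    simp only [mem_ofPred_eq] at ht ⊢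
    rw [← hQ, Polynomial.eval_C]
    exact ht
  have h1 := hQ 1
  rw [hQc, Polynomial.eval_C] at h1
  simpa using h1

lemma no_degenerate {n : ℕ} (u : EuclideanSpace ℝ (Fin n) → EuclideanSpace ℝ (Fin n))
    (hu : ContDiff ℝ 1 u) (hcs : HasCompactSupport u) (h0 : ∀ x, 2 < ‖x‖ → u x = 0)
    (hsmall : ∀ x, ‖u x‖ ≤ 1 / 4)
    (hdet : ∀ x, ‖x‖ < 1 → (ContinuousLinearMap.id ℝ _ + fderiv ℝ u x).det = 0) : False := by
  have hc : Continuous (fderiv ℝ u) := hu.continuous_fderiv (by simp)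
  have hdc : Continuous fun x => (ContinuousLinearMap.id ℝ _ + fderiv ℝ u x).det :=
    ContinuousLinearMap.continuous_det.comp (by fun_prop)
  set B := closedBall (0 : EuclideanSpace ℝ (Fin n)) 2 with hB
  set C := ∫ x in B, |(ContinuousLinearMap.id ℝ _ + fderiv ℝ u x).det| with hC
  set v := volume.real (closedBall (0 : EuclideanSpace ℝ (Fin n)) (1/2)) with hv
  have hvpos : 0 < v := by
    rw [hv, measureReal_def]
    exact ENNReal.toReal_pos (measure_closedBall_pos _ _ (by norm_num)).ne'
      (isCompact_closedBall _ _).measure_lt_top.ne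
  have hBc : IsCompact B := isCompact_closedBall _ _
  have upper : ∀ k : ℕ, ∫ x in B,
      (ContinuousLinearMap.id ℝ _ + fderiv ℝ u x).det * (1 - ‖x + u x‖ ^ 2 / 8) ^ k
      ≤ C * (119 / 128) ^ k := by
    intro k
    rw [hC, ← integral_mul_const]
    have huc := hu.continuous
    refine setIntegral_mono_on (ContinuousOn.integrableOn_compact hBc (by fun_prop))
      (ContinuousOn.integrableOn_compact hBc (hdc.abs.mul continuous_const).continuousOn)
      measurableSet_closedBall ?_
    intro x hx
    rw [hB, mem_closedBall_zero_iff] at hx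
    by_cases h1 : ‖x‖ < 1
    · rw [hdet x h1]; simp
    · refine (le_abs_self _).trans ?_
      rw [abs_mul]
      refine mul_le_mul_of_nonneg_left ?_ (abs_nonneg _)
      have hux := hsmall x
      have ha : ‖x + u x‖ ≤ 9 / 4 := (norm_add_le _ _).trans (by linarith)
      have hb : 3 / 4 ≤ ‖x + u x‖ := by
        have := norm_sub_norm_le x (-u x)
        rw [norm_neg, sub_neg_eq_add] at this
        linarith
      rw [abs_pow]
      gcongr
      rw [abs_le]
      constructor <;> nlinarith
  have lower : ∀ k : ℕ, v * (31 / 32) ^ k ≤ ∫ x in B, (1 - ‖x‖ ^ 2 / 8) ^ k := by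
    intro k
    have hsub : closedBall (0 : EuclideanSpace ℝ (Fin n)) (1/2) ⊆ B :=
      closedBall_subset_closedBall (by norm_num)
    have hint : IntegrableOn (fun x : EuclideanSpace ℝ (Fin n) => (1 - ‖x‖ ^ 2 / 8) ^ k) B :=
      ContinuousOn.integrableOn_compact hBc (by fun_prop)
    calc v * (31 / 32) ^ k
        = ∫ x in closedBall (0 : EuclideanSpace ℝ (Fin n)) (1/2), ((31 : ℝ) / 32) ^ k := by
          rw [setIntegral_const, smul_eq_mul]
      _ ≤ ∫ x in closedBall (0 : EuclideanSpace ℝ (Fin n)) (1/2), (1 - ‖x‖ ^ 2 / 8) ^ k := by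
          refine setIntegral_mono_on (ContinuousOn.integrableOn_compact
            (isCompact_closedBall _ _) (by fun_prop)) (hint.mono_set hsub)
            measurableSet_closedBall ?_
          intro x hx
          rw [mem_closedBall_zero_iff] at hx
          gcongr
          nlinarith [norm_nonneg x]
      _ ≤ _ := by
          refine setIntegral_mono_set hint ?_ hsub.eventuallyLE
          refine (ae_restrict_iff' measurableSet_closedBall).2 (Eventually.of_forall ?_)
          intro x hx
          rw [mem_closedBall_zero_iff] at hx
          have : 0 ≤ 1 - ‖x‖ ^ 2 / 8 := by nlinarith [norm_nonneg x]
          exact pow_nonneg this k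
  have hall : ∀ k : ℕ, v ≤ C * (119 / 124) ^ k := by
    intro k
    have h1 := ((lower k).trans_eq (degree_identity u hu hcs h0 k).symm).trans (upper k)
    have h2 : ((119 : ℝ) / 128) ^ k = (119 / 124) ^ k * (31 / 32) ^ k := by
      rw [← mul_pow]; norm_num
    rw [h2, ← mul_assoc] at h1
    exact le_of_mul_le_mul_right h1 (by positivity)
  have hlim : Tendsto (fun k : ℕ => C * ((119 : ℝ) / 124) ^ k) atTop (𝓝 (C * 0)) :=
    (tendsto_pow_atTop_nhds_zero_of_lt_one (by norm_num) (by norm_num)).const_mul C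
  have := ge_of_tendsto' hlim hall
  simp at this
  linarith

lemma no_homeo_of_lt {n m : ℕ} (hmn : m < n)
    (e : EuclideanSpace ℝ (Fin n) ≃ₜ EuclideanSpace ℝ (Fin m)) : False := by
  obtain ⟨g, hg, hg'⟩ : ∃ g : EuclideanSpace ℝ (Fin m) → EuclideanSpace ℝ (Fin n),
      ContDiff ℝ 1 g ∧ ∀ y, dist (g y) (e.symm y) < 1 / 8 := by
    obtain ⟨g, hg, hg', -⟩ := e.symm.continuous.exists_contDiff_approx 1
      (ε := fun _ => 1 / 8) continuous_const (fun _ => by norm_num)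
    exact ⟨g, by exact_mod_cast hg, hg'⟩
  have hK : IsCompact (e '' closedBall 0 2) := (isCompact_closedBall 0 2).image e.continuous
  obtain ⟨δ, hδ, hδ'⟩ := Metric.mem_uniformity_dist.1
    (hK.uniformContinuousAt_of_continuousAt e.symm
      (fun a _ => e.symm.continuous.continuousAt)
      (Metric.dist_mem_uniformity (show (0 : ℝ) < 1 / 8 by norm_num)))
  obtain ⟨f, hf, hf'⟩ : ∃ f : EuclideanSpace ℝ (Fin n) → EuclideanSpace ℝ (Fin m),
      ContDiff ℝ 1 f ∧ ∀ y, dist (f y) (e y) < δ := by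
    obtain ⟨g, hg, hg', -⟩ := e.continuous.exists_contDiff_approx 1
      (ε := fun _ => δ) continuous_const (fun _ => hδ)
    exact ⟨g, by exact_mod_cast hg, hg'⟩
  have hclose : ∀ x, ‖x‖ ≤ 2 → ‖g (f x) - x‖ ≤ 1 / 4 := by
    intro x hx
    have h1 := hg' (f x)
    have h2 := hδ' (a := e x) (b := f x) (by rw [dist_comm]; exact hf' x)
      ⟨x, by simpa using hx, rfl⟩
    simp only [mem_ofPred_eq, Homeomorph.symm_apply_apply] at h2
    rw [← dist_eq_norm]
    have h3 := dist_triangle_right (g (f x)) x (e.symm (f x))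
    linarith
  let χ : ContDiffBump (0 : EuclideanSpace ℝ (Fin n)) := ⟨1, 2, by norm_num, by norm_num⟩
  have hχ0 : ∀ x, 2 ≤ ‖x‖ → χ x = 0 := fun x hx =>
    χ.zero_of_le_dist (by simpa [χ] using hx)
  refine no_degenerate (fun x => χ x • (g (f x) - x)) ?_ ?_ ?_ ?_ ?_
  · exact χ.contDiff.smul ((hg.comp hf).sub contDiff_id)
  · exact χ.hasCompactSupport.smul_right
  · intro x hx
    simp [hχ0 x hx.le]
  · intro x
    by_cases hx : ‖x‖ ≤ 2
    · rw [norm_smul, Real.norm_of_nonneg χ.nonneg]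
      calc χ x * ‖g (f x) - x‖ ≤ 1 * (1 / 4) :=
            mul_le_mul χ.le_one (hclose x hx) (norm_nonneg _) zero_le_one
        _ = _ := one_mul _
    · simp [hχ0 x (not_le.1 hx).le]
  · intro x hx
    have heq : (fun x => χ x • (g (f x) - x)) =ᶠ[𝓝 x] fun x => g (f x) - x := by
      have : ball (0 : EuclideanSpace ℝ (Fin n)) 1 ∈ 𝓝 x :=
        isOpen_ball.mem_nhds (by simpa using hx)
      filter_upwards [this] with y hy
      rw [χ.one_of_mem_closedBall (ball_subset_closedBall hy), one_smul]
    have hgd : HasFDerivAt g (fderiv ℝ g (f x)) (f x) :=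
      (hg.differentiable (by simp) _).hasFDerivAt
    have hfd : HasFDerivAt f (fderiv ℝ f x) x := (hf.differentiable (by simp) _).hasFDerivAt
    have hd := (hgd.comp x hfd).sub (hasFDerivAt_id x)
    rw [heq.fderiv_eq]
    have hd' : fderiv ℝ (fun x => g (f x) - x) x =
      (fderiv ℝ g (f x)).comp (fderiv ℝ f x) - ContinuousLinearMap.id ℝ _ := hd.fderiv
    rw [hd', add_sub_cancel]
    exact det_comp_eq_zero_of_finrank_lt (by simpa using hmn) _ _

theorem euclidean_homeomorphic_iff_dim_eq (n m : ℕ)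
    (h : Nonempty (EuclideanSpace ℝ (Fin n) ≃ₜ EuclideanSpace ℝ (Fin m))) :
    n = m := by
  obtain ⟨e⟩ := h
  rcases lt_trichotomy n m with h | h | h
  · exact (no_homeo_of_lt h e.symm).elim
  · exact h
  · exact (no_homeo_of_lt h e).elim
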